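/- arXiv:2106.06635 — 8 statements merged into one kernel-verified Lean document; each statement's English description precedes it below -/
import Mathlib

section
/- Fix integers K ≥ 2, N ≥ 1, t ≥ 1, a user i ∈ Fin K, and set S := (Fin K) \ {i}. Let d : Fin K → Fin N be a demand vector, let V be a vector space over GF(2), and for each file q ∈ Fin N and each (t+1)-element subset C ⊆ Fin K with i ∈ C let W_{q,C} ∈ V be an arbitrary vector. For each t-element subset A ⊆ S define the codeword Y_A := Σ_{k ∈ A} W_{d(k), (A ∪ {i}) \ {k}} (sum in V). Then for every (t+1)-element subset B ⊆ S: Σ_{k ∈ B} Y_{B \ {k}} = Σ_{(j,k) : j, k ∈ B, j ≠ k, d(j) ≠ d(k)} W_{d(j), (B ∪ {i}) \ {j, k}}, where the right-hand sum ranges over ordered pairs. -/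
/-- for the D2D codewords `Y A = ∑_{k ∈ A} W (d k) ((A ∪ {i}) \ {k})`
(sums in a GF(2) vector space `V`), and any `(t+1)`-subset `B` of `S = (Fin K) \ {i}`,
`∑_{k ∈ B} Y (B \ {k})` equals the ordered-pair sum
`∑_{(j,k) : j,k ∈ B, j ≠ k, d j ≠ d k} W (d j) ((B ∪ {i}) \ {j, k})`. -/
theorem stmt_4 (K N t : ℕ) (hK : 2 ≤ K) (hN : 1 ≤ N) (ht : 1 ≤ t)
    (i : Fin K) (d : Fin K → Fin N)
    (V : Type*) [AddCommGroup V] [Module (ZMod 2) V]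
    (W : Fin N → Finset (Fin K) → V)
    (Y : Finset (Fin K) → V)
    (hY : ∀ A : Finset (Fin K), A ⊆ Finset.univ.erase i → A.card = t →
      Y A = ∑ k ∈ A, W (d k) (insert i A \ {k}))
    (B : Finset (Fin K)) (hBS : B ⊆ Finset.univ.erase i) (hBcard : B.card = t + 1) :
    ∑ k ∈ B, Y (B \ {k}) =
      ∑ p ∈ (B ×ˢ B).filter (fun p : Fin K × Fin K => p.1 ≠ p.2 ∧ d p.1 ≠ d p.2),
        W (d p.1) (insert i B \ ({p.1, p.2} : Finset (Fin K))) := by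
  have h2 : ∀ v : V, v + v = 0 := fun v => by
    have h : ((2 : ZMod 2)) • v = v + v := two_smul _ v
    rw [← h, show (2 : ZMod 2) = 0 from rfl, zero_smul]
  have hL : ∑ k ∈ B, Y (B \ {k}) =
      ∑ p ∈ (B ×ˢ B).filter (fun p : Fin K × Fin K => p.1 ≠ p.2),
        W (d p.1) (insert i B \ ({p.1, p.2} : Finset (Fin K))) := by
    rw [Finset.sum_filter, Finset.sum_product_right]
    refine Finset.sum_congr rfl fun k hk => ?_
    have hki : k ≠ i := Finset.ne_of_mem_erase (hBS hk)
    rw [hY (B \ {k}) (Finset.sdiff_subset.trans hBS)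
      (by rw [Finset.sdiff_singleton_eq_erase, Finset.card_erase_of_mem hk, hBcard]; rfl),
      ← Finset.sum_filter]
    have hs : B \ {k} = B.filter (fun j => j ≠ k) := by
      ext j; simp
    refine Finset.sum_congr hs fun j _ => ?_
    congr 1
    ext x
    simp only [Finset.mem_sdiff, Finset.mem_insert, Finset.mem_singleton]
    grind
  rw [hL, ← Finset.sum_filter_add_sum_filter_not _ (fun p : Fin K × Fin K => d p.1 ≠ d p.2),
    Finset.filter_filter, Finset.filter_filter]
  rw [add_eq_left]
  refine Finset.sum_involution (fun p _ => (p.2, p.1)) ?_ ?_ ?_ ?_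
  · rintro ⟨j, k⟩ hp
    simp only [Finset.mem_filter, not_not] at hp
    simp only
    rw [hp.2.2, Finset.pair_comm k j]
    exact h2 _
  · rintro ⟨j, k⟩ hp _ h
    simp only [Finset.mem_filter, Prod.mk.injEq] at hp h
    exact hp.2.1 h.2
  · rintro ⟨j, k⟩ hp
    simp only [Finset.mem_filter, Finset.mem_product, not_not] at hp ⊢
    exact ⟨⟨hp.1.2, hp.1.1⟩, hp.2.1.symm, hp.2.2.symm⟩
  · rintro ⟨j, k⟩ hp
    rfl
end

section
/- Fix integers K ≥ 2, N ≥ 1, t ≥ 1, a user i ∈ Fin K, and set S := (Fin K) \ {i}. Let d : Fin K → Fin N be a demand vector, let V be a vector space over GF(2), and for each file q ∈ Fin N and each (t+1)-element subset C ⊆ Fin K with i ∈ C let W_{q,C} ∈ V be an arbitrary vector. For each t-element subset A ⊆ S define the codeword Y_A := Σ_{k ∈ A} W_{d(k), (A ∪ {i}) \ {k}} (sum in V). If B ⊆ S is a (t+1)-element subset on which d is constant (all users in B request the same file), then Σ_{k ∈ B} Y_{B \ {k}} = 0. -/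
/-- for the D2D codewords `Y A = ∑_{k ∈ A} W (d k) ((A ∪ {i}) \ {k})`
(sums in a GF(2) vector space `V`), if `B` is a `(t+1)`-subset of `S = (Fin K) \ {i}`
on which the demand `d` is constant, then `∑_{k ∈ B} Y (B \ {k}) = 0`. -/
theorem stmt_5 (K N t : ℕ) (hK : 2 ≤ K) (hN : 1 ≤ N) (ht : 1 ≤ t)
    (i : Fin K) (d : Fin K → Fin N)
    (V : Type*) [AddCommGroup V] [Module (ZMod 2) V]
    (W : Fin N → Finset (Fin K) → V)
    (Y : Finset (Fin K) → V)
    (hY : ∀ A : Finset (Fin K), A ⊆ Finset.univ.erase i → A.card = t →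
      Y A = ∑ k ∈ A, W (d k) (insert i A \ {k}))
    (B : Finset (Fin K)) (hBS : B ⊆ Finset.univ.erase i) (hBcard : B.card = t + 1)
    (hconst : ∀ k ∈ B, ∀ k' ∈ B, d k = d k') :
    ∑ k ∈ B, Y (B \ {k}) = 0 := by
  have h2 : ∀ v : V, v + v = 0 := fun v => by
    rw [← two_smul (ZMod 2) v, show (2 : ZMod 2) = 0 from rfl, zero_smul]
  have h1 : ∀ k ∈ B, Y (B \ {k}) = ∑ l ∈ B \ {k}, W (d l) (insert i (B \ {k}) \ {l}) := by
    intro k hk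
    apply hY _ (Finset.sdiff_subset.trans hBS)
    rw [Finset.card_sdiff_of_subset (by simpa using hk), hBcard]
    simp
  rw [Finset.sum_congr rfl h1, Finset.sum_sigma']
  refine Finset.sum_involution (fun a _ => ⟨a.2, a.1⟩) ?_ ?_ ?_ ?_
  · rintro ⟨k, l⟩ h
    simp only [Finset.mem_sigma, Finset.mem_sdiff, Finset.mem_singleton] at h
    obtain ⟨hk, hl, hne⟩ := h
    have hs : insert i (B \ {k}) \ {l} = insert i (B \ {l}) \ {k} := by
      have hki := Finset.ne_of_mem_erase (hBS hk)
      have hli := Finset.ne_of_mem_erase (hBS hl)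
      ext x
      simp only [Finset.mem_sdiff, Finset.mem_insert, Finset.mem_singleton]
      grind
    simp only [hs, hconst l hl k hk]
    exact h2 _
  · rintro ⟨k, l⟩ h _ he
    simp only [Finset.mem_sigma, Finset.mem_sdiff, Finset.mem_singleton] at h
    exact h.2.2 (congrArg Sigma.fst he)
  · rintro ⟨k, l⟩ h
    simp only [Finset.mem_sigma, Finset.mem_sdiff, Finset.mem_singleton] at h ⊢
    exact ⟨h.2.1, h.1, fun e => h.2.2 e.symm⟩
  · rintro ⟨k, l⟩ h
    rfl
end

section
/- Fix integers K ≥ 2, N ≥ 1, t ≥ 1, a user i ∈ Fin K, and set S := (Fin K) \ {i}. Let d : Fin K → Fin N be a demand vector, let V be a vector space over GF(2), and for each file q ∈ Fin N and each (t+1)-element subset C ⊆ Fin K with i ∈ C let W_{q,C} ∈ V be an arbitrary vector. For each t-element subset A ⊆ S define the codeword Y_A := Σ_{k ∈ A} W_{d(k), (A ∪ {i}) \ {k}} (sum in V). Let U ⊆ S be a set of leading demanders, i.e., d is injective on U and d(U) = d(S). Then for every t-element subset A ⊆ S with A ∩ U = ∅, the vector Y_A lies in the GF(2)-linear span of the set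 {Y_{A'} : A' ⊆ S, |A'| = t, A' ∩ U ≠ ∅}. -/
/-- Summing all codewords of complements of transversals gives zero in characteristic two. -/
theorem sum_transversals_zero {α β V : Type*} [DecidableEq α] [DecidableEq β] [AddCommGroup V]
    (h2 : ∀ v : V, v + v = 0) (d : α → β) (i : α) (W : β → Finset α → V)
    (B : Finset α) (T : Finset (Finset α)) (I : Finset β) (hB : ∀ b ∈ B, d b ∈ I) (hi : i ∉ B)
    (hT : ∀ X, X ∈ T ↔ X ⊆ B ∧ (∀ x ∈ X, ∀ y ∈ X, d x = d y → x = y) ∧ X.image d = I) :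
    ∑ X ∈ T, ∑ k ∈ B \ X, W (d k) (insert i (B \ X) \ {k}) = 0 := by
  classical
  have hex : ∀ (X : Finset α) (k : α), ∃ v, X ∈ T → k ∈ B → v ∈ X ∧ d v = d k := by
    intro X k
    by_cases h : X ∈ T ∧ k ∈ B
    · have h1 := hB k h.2
      rw [← ((hT X).1 h.1).2.2, Finset.mem_image] at h1
      obtain ⟨v, hv⟩ := h1
      exact ⟨v, fun _ _ => hv⟩
    · exact ⟨k, fun a b => absurd ⟨a, b⟩ h⟩
  choose f hf using hex
  have key : ∀ X k, X ∈ T → k ∈ B → k ∉ X →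
      insert k (X.erase (f X k)) ∈ T ∧ f X k ∈ B ∧ f X k ∉ insert k (X.erase (f X k)) ∧
      f (insert k (X.erase (f X k))) (f X k) = k ∧
      insert (f X k) ((insert k (X.erase (f X k))).erase k) = X ∧
      insert i (B \ insert k (X.erase (f X k))) \ {f X k} = insert i (B \ X) \ {k} := by
    intro X k hX hk hkX
    obtain ⟨hv, hd⟩ := hf X k hX hk
    obtain ⟨hXB, hinj, him⟩ := (hT X).1 hX
    generalize f X k = v at *
    have hne : v ≠ k := fun h => hkX (h ▸ hv)
    have hX' : insert k (X.erase v) ∈ T := by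
      rw [hT]
      refine ⟨?_, ?_, ?_⟩
      · intro x; grind
      · intro x hx y hy hxy; grind
      · rw [← him]; ext b; simp only [Finset.mem_image]; constructor
        · rintro ⟨x, hx, rfl⟩; grind
        · rintro ⟨x, hx, rfl⟩
          by_cases hxv : x = v
          · exact ⟨k, by grind, by grind⟩
          · exact ⟨x, by grind, rfl⟩
    obtain ⟨h3, h4⟩ := hf _ v hX' (hXB hv)
    refine ⟨hX', hXB hv, by grind, ?_, ?_, ?_⟩
    · exact ((hT _).1 hX').2.1 _ h3 _ (by grind) (h4.trans hd)
    · ext x; grind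
    · have := hXB hv
      ext x; grind
  rw [Finset.sum_sigma']
  refine Finset.sum_involution
    (fun p _ => ⟨insert p.2 (p.1.erase (f p.1 p.2)), f p.1 p.2⟩) ?_ ?_ ?_ ?_
  · rintro ⟨X, k⟩ hp
    simp only [Finset.mem_sigma, Finset.mem_sdiff] at hp
    have hk := key X k hp.1 hp.2.1 hp.2.2
    dsimp only
    rw [hk.2.2.2.2.2, (hf X k hp.1 hp.2.1).2, h2]
  · rintro ⟨X, k⟩ hp _ heq
    simp only [Finset.mem_sigma, Finset.mem_sdiff] at hp
    have h5 : f X k = k := congrArg Sigma.snd heq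
    exact hp.2.2 (h5 ▸ (hf X k hp.1 hp.2.1).1)
  · rintro ⟨X, k⟩ hp
    simp only [Finset.mem_sigma, Finset.mem_sdiff] at hp ⊢
    have hk := key X k hp.1 hp.2.1 hp.2.2
    exact ⟨hk.1, hk.2.1, hk.2.2.1⟩
  · rintro ⟨X, k⟩ hp
    simp only [Finset.mem_sigma, Finset.mem_sdiff] at hp
    have hk := key X k hp.1 hp.2.1 hp.2.2
    dsimp only
    rw [hk.2.2.2.1, hk.2.2.2.2.1]

/-- let `U ⊆ S = (Fin K) \ {i}` be a set of leading demanders (`d` injective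
on `U` with `d(U) = d(S)`). Then every codeword `Y A = ∑_{k ∈ A} W (d k) ((A ∪ {i}) \ {k})`
with `A` a `t`-subset of `S` disjoint from `U` lies in the GF(2)-span of the codewords
`Y A'` with `A'` a `t`-subset of `S` meeting `U`. -/
theorem stmt_6 (K N t : ℕ) (hK : 2 ≤ K) (hN : 1 ≤ N) (ht : 1 ≤ t)
    (i : Fin K) (d : Fin K → Fin N)
    (V : Type*) [AddCommGroup V] [Module (ZMod 2) V]
    (W : Fin N → Finset (Fin K) → V)
    (U : Finset (Fin K)) (hUS : U ⊆ Finset.univ.erase i)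
    (hUinj : Set.InjOn d (U : Set (Fin K)))
    (hUimg : U.image d = (Finset.univ.erase i).image d)
    (A : Finset (Fin K)) (hAS : A ⊆ Finset.univ.erase i) (hAcard : A.card = t)
    (hAU : A ∩ U = ∅) :
    (∑ k ∈ A, W (d k) (insert i A \ {k})) ∈
      Submodule.span (ZMod 2)
        {v : V | ∃ A' : Finset (Fin K), A' ⊆ Finset.univ.erase i ∧ A'.card = t ∧
          (A' ∩ U).Nonempty ∧ v = ∑ k ∈ A', W (d k) (insert i A' \ {k})} := by
  classical
  have h2 : ∀ v : V, v + v = 0 := by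
    intro v
    have h : ((1 : ZMod 2) + 1) • v = 0 := by
      rw [show (1 : ZMod 2) + 1 = 0 from by decide, zero_smul]
    simpa [add_smul] using h
  have hdisj : Disjoint A U := Finset.disjoint_iff_inter_eq_empty.2 hAU
  have hBS : A ∪ U ⊆ Finset.univ.erase i := Finset.union_subset hAS hUS
  let T : Finset (Finset (Fin K)) := (A ∪ U).powerset.filter
    (fun X => (∀ x ∈ X, ∀ y ∈ X, d x = d y → x = y) ∧ X.image d = U.image d)
  have hT : ∀ X, X ∈ T ↔ X ⊆ A ∪ U ∧ (∀ x ∈ X, ∀ y ∈ X, d x = d y → x = y) ∧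
      X.image d = U.image d := by
    intro X; simp only [T, Finset.mem_filter, Finset.mem_powerset]
  have hz := sum_transversals_zero h2 d i W (A ∪ U) T (U.image d)
    (fun b hb => by rw [hUimg]; exact Finset.mem_image_of_mem d (hBS hb))
    (fun h => by simpa using hBS h) hT
  have hUT : U ∈ T := (hT U).2 ⟨Finset.subset_union_right,
    fun x hx y hy h => hUinj hx hy h, rfl⟩
  rw [← Finset.add_sum_erase T _ hUT, Finset.union_sdiff_cancel_right hdisj] at hz
  rw [eq_neg_of_add_eq_zero_left hz]
  refine Submodule.neg_mem _ (Submodule.sum_mem _ fun X hX => Submodule.subset_span ?_)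
  obtain ⟨hne, hX⟩ := Finset.mem_erase.1 hX
  obtain ⟨hXB, hinj, him⟩ := (hT X).1 hX
  have hcard : X.card = U.card := by
    rw [← Finset.card_image_of_injOn hUinj, ← him, Finset.card_image_of_injOn]
    exact fun x hx y hy h => hinj x hx y hy h
  refine ⟨(A ∪ U) \ X, Finset.sdiff_subset.trans hBS, ?_, ?_, rfl⟩
  · rw [Finset.card_sdiff_of_subset hXB, Finset.card_union_of_disjoint hdisj]
    omega
  · by_contra hemp
    rw [Finset.not_nonempty_iff_eq_empty] at hemp
    have hsub : U ⊆ X := by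
      intro u hu
      by_contra huX
      have : u ∈ ((A ∪ U) \ X) ∩ U := by simp [hu, huX]
      simp [hemp] at this
    exact hne (Finset.eq_of_subset_of_card_le hsub hcard.le).symm
end

section
/- Let K, N, t be integers with N ≥ 1, K ≥ 2N, and 1 ≤ t ≤ K. For a demand vector d : Fin K → Fin N and a user k ∈ Fin K, let Ne_{\k}(d) denote the number of distinct values of d on (Fin K) \ {k}. Then the minimum over all demand vectors d : Fin K → Fin N of Σ_{k ∈ Fin K} C(K − 1 − Ne_{\k}(d), t) equals K · C(K − 1 − N, t). -/
/-- for `N ≥ 1`, `K ≥ 2N`, `1 ≤ t ≤ K`, the minimum over demand vectors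
`d : Fin K → Fin N` of `∑_k C(K−1−Ne_{\k}(d), t)` equals `K · C(K−1−N, t)`, where
`Ne_{\k}(d)` is the number of distinct values of `d` on `(Fin K) \ {k}`. -/
theorem stmt_8 (K N t : ℕ) (hN : 1 ≤ N) (hK : 2 * N ≤ K) (ht : 1 ≤ t) (htK : t ≤ K) :
    IsLeast {x : ℕ | ∃ d : Fin K → Fin N,
        x = ∑ k : Fin K,
          Nat.choose (K - 1 - ((Finset.univ.erase k).image d).card) t}
      (K * Nat.choose (K - 1 - N) t) := by
  constructor
  · refine ⟨fun k => ⟨k.val % N, Nat.mod_lt _ hN⟩, ?_⟩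
    have h : ∀ k : Fin K, ((Finset.univ.erase k).image
        (fun k : Fin K => (⟨k.val % N, Nat.mod_lt _ hN⟩ : Fin N))) = Finset.univ := by
      intro k
      ext j
      simp only [Finset.mem_image, Finset.mem_erase, Finset.mem_univ, and_true, iff_true]
      have hj := j.isLt
      by_cases hk : k.val = j.val
      · refine ⟨⟨j.val + N, by omega⟩, ?_, ?_⟩
        · intro h
          have := congrArg Fin.val h
          simp only at this
          omega
        · apply Fin.ext
          simp [Nat.mod_eq_of_lt hj]
      · refine ⟨⟨j.val, by omega⟩, ?_, ?_⟩
        · intro h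
          exact hk (congrArg Fin.val h).symm
        · apply Fin.ext
          simp [Nat.mod_eq_of_lt hj]
    simp [h]
  · rintro x ⟨d, rfl⟩
    have h : ∀ k ∈ (Finset.univ : Finset (Fin K)), Nat.choose (K - 1 - N) t ≤
        Nat.choose (K - 1 - ((Finset.univ.erase k).image d).card) t := by
      intro k _
      apply Nat.choose_le_choose
      have := Finset.card_le_univ ((Finset.univ.erase k).image d)
      rw [Fintype.card_fin] at this
      omega
    simpa using Finset.sum_le_sum h
end

section
/- Let K, N, t be integers with 1 ≤ t ≤ K and N < K < 2N. For a demand vector d : Fin K → Fin N and a user k ∈ Fin K, let Ne_{\k}(d) denote the number of distinct values of d on (Fin K) \ {k}. Then the minimum over all demand vectors d : Fin K → Fin N of Σ_{k ∈ Fin K} C(K − 1 − Ne_{\k}(d), t) equals (2N − K) · C(K − N, t) + 2(K − N) · C(K − 1 − N, t). -/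
open Classical in
theorem aux_sum {K N t : ℕ} (hNK : N < K) (d : Fin K → Fin N) :
    ∑ k : Fin K, Nat.choose (K - 1 - ((Finset.univ.erase k).image d).card) (t + 1)
      = K * Nat.choose (K - 1 - (Finset.univ.image d).card) (t + 1)
        + (Finset.univ.filter (fun k => ∀ j, d j = d k → j = k)).card
          * Nat.choose (K - 1 - (Finset.univ.image d).card) t := by
  have hmN : (Finset.univ.image d).card ≤ N := by
    simpa using Finset.card_le_univ (Finset.univ.image d)
  have key : ∀ k : Fin K, Nat.choose (K - 1 - ((Finset.univ.erase k).image d).card) (t + 1)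
      = Nat.choose (K - 1 - (Finset.univ.image d).card) (t + 1)
        + if (∀ j, d j = d k → j = k) then
          Nat.choose (K - 1 - (Finset.univ.image d).card) t else 0 := by
    intro k
    have hk : d k ∈ Finset.univ.image d := Finset.mem_image_of_mem _ (Finset.mem_univ _)
    have hpos : 0 < (Finset.univ.image d).card := Finset.card_pos.mpr ⟨_, hk⟩
    split_ifs with h
    · have e : (Finset.univ.erase k).image d = (Finset.univ.image d).erase (d k) := by
        ext v
        simp only [Finset.mem_image, Finset.mem_erase, Finset.mem_univ, and_true, true_and]
        constructor
        · rintro ⟨j, hj, rfl⟩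
          exact ⟨fun hh => hj (h j hh), j, rfl⟩
        · rintro ⟨hv, j, rfl⟩
          exact ⟨j, fun hh => hv (by rw [hh]), rfl⟩
      rw [e, Finset.card_erase_of_mem hk]
      have : K - 1 - ((Finset.univ.image d).card - 1)
        = (K - 1 - (Finset.univ.image d).card) + 1 := by omega
      rw [this, Nat.choose_succ_succ, add_comm]
    · push Not at h
      obtain ⟨j, hj, hjk⟩ := h
      have e : (Finset.univ.erase k).image d = Finset.univ.image d := by
        ext v
        simp only [Finset.mem_image, Finset.mem_erase, Finset.mem_univ, and_true, true_and]
        constructor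
        · rintro ⟨i, _, rfl⟩
          exact ⟨i, rfl⟩
        · rintro ⟨i, rfl⟩
          by_cases hi : i = k
          · exact ⟨j, hjk, by rw [hj, hi]⟩
          · exact ⟨i, hi, rfl⟩
      rw [e, add_zero]
  rw [Finset.sum_congr rfl (fun k _ => key k), Finset.sum_add_distrib, ← Finset.sum_filter]
  simp

open Classical in
theorem aux_count {K N : ℕ} (d : Fin K → Fin N) :
    2 * (Finset.univ.image d).card ≤
      K + (Finset.univ.filter (fun k => ∀ j, d j = d k → j = k)).card := by
  have h1 : (Finset.univ : Finset (Fin K)).card = _ :=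
    Finset.card_eq_sum_card_fiberwise (f := d) (t := Finset.univ.image d)
      (fun x _ => by simp)
  have h2 := Finset.card_eq_sum_card_fiberwise (f := d)
      (s := Finset.univ.filter (fun k => ∀ j, d j = d k → j = k)) (t := Finset.univ.image d)
      (fun x _ => by simp)
  rw [Finset.card_univ, Fintype.card_fin] at h1
  rw [h2]
  refine le_trans ?_ (Nat.add_le_add_right h1.ge _)
  rw [← Finset.sum_add_distrib, mul_comm, ← smul_eq_mul]
  apply Finset.card_nsmul_le_sum
  intro v hv
  obtain ⟨k, -, rfl⟩ := Finset.mem_image.mp hv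
  by_cases h : ∀ j, d j = d k → j = k
  · have a1 : 0 < (Finset.univ.filter (fun x => d x = d k)).card :=
      Finset.card_pos.mpr ⟨k, by simp⟩
    have a2 : 0 < ((Finset.univ.filter (fun k => ∀ j, d j = d k → j = k)).filter
        (fun x => d x = d k)).card :=
      Finset.card_pos.mpr ⟨k, by simpa using h⟩
    omega
  · push Not at h
    obtain ⟨j, hj, hjk⟩ := h
    have a1 : 1 < (Finset.univ.filter (fun x => d x = d k)).card :=
      Finset.one_lt_card.mpr ⟨j, by simpa using hj, k, by simp, hjk⟩
    omega

theorem aux_mono {K t m N : ℕ} (hK : 2 ≤ K) (hmN : m ≤ N) (hN : N < K) :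
    K * Nat.choose (K - 1 - N) (t + 1) + (2 * N - K) * Nat.choose (K - 1 - N) t ≤
    K * Nat.choose (K - 1 - m) (t + 1) + (2 * m - K) * Nat.choose (K - 1 - m) t := by
  induction N, hmN using Nat.le_induction with
  | base => exact le_rfl
  | succ n hmn ih =>
    refine le_trans ?_ (ih (by omega))
    have e : K - 1 - n = (K - 1 - (n + 1)) + 1 := by omega
    rw [e, Nat.choose_succ_succ]
    generalize K - 1 - (n + 1) = a
    have h1 : 2 * (n + 1) - K ≤ (2 * n - K) + 2 := by omega
    have h2 : a.choose t ≤ (a + 1).choose t := Nat.choose_le_choose t (Nat.le_succ a)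
    have h3 := Nat.mul_le_mul_right (a.choose t) h1
    have h4 := Nat.mul_le_mul_left (2 * n - K) h2
    have h5 := Nat.mul_le_mul_right (a.choose t) hK
    simp only [Nat.succ_eq_add_one]
    nlinarith

theorem aux_val {K t N : ℕ} (hN : N < K) (h2 : K < 2 * N) :
    (2 * N - K) * Nat.choose (K - N) (t + 1) + 2 * (K - N) * Nat.choose (K - 1 - N) (t + 1)
    = K * Nat.choose (K - 1 - N) (t + 1) + (2 * N - K) * Nat.choose (K - 1 - N) t := by
  have e : K - N = (K - 1 - N) + 1 := by omega
  have e2 : K = (2 * N - K) + 2 * (K - N) := by omega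
  have e3 : (K - N).choose (t + 1) = (K - 1 - N).choose t + (K - 1 - N).choose (t + 1) := by
    rw [e, Nat.choose_succ_succ]
  rw [e3]
  generalize (K - 1 - N).choose (t + 1) = x at *
  generalize (K - 1 - N).choose t = y at *
  generalize 2 * N - K = p at *
  generalize K - N = q at *
  subst e2
  ring

/-- for `1 ≤ t ≤ K` and `N < K < 2N`, the minimum over demand vectors
`d : Fin K → Fin N` of `∑_k C(K−1−Ne_{\k}(d), t)` equals
`(2N−K)·C(K−N, t) + 2(K−N)·C(K−1−N, t)`, where `Ne_{\k}(d)` is the number of distinct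
values of `d` on `(Fin K) \ {k}`. -/
theorem stmt_9 (K N t : ℕ) (ht : 1 ≤ t) (htK : t ≤ K) (hNK : N < K) (hK2N : K < 2 * N) :
    IsLeast {x : ℕ | ∃ d : Fin K → Fin N,
        x = ∑ k : Fin K,
          Nat.choose (K - 1 - ((Finset.univ.erase k).image d).card) t}
      ((2 * N - K) * Nat.choose (K - N) t
        + 2 * (K - N) * Nat.choose (K - 1 - N) t) := by
  classical
  obtain ⟨t, rfl⟩ : ∃ s, t = s + 1 := ⟨t - 1, by omega⟩
  rw [aux_val hNK hK2N]
  constructor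
  · let d : Fin K → Fin N := fun k =>
      if h : k.val < N then ⟨k.val, h⟩ else ⟨k.val - N, by omega⟩
    have hd : ∀ k, (d k).val = if k.val < N then k.val else k.val - N := by
      intro k
      simp only [d]
      split_ifs <;> rfl
    refine ⟨d, ?_⟩
    have himg : Finset.univ.image d = Finset.univ := by
      ext v
      simp only [Finset.mem_image, Finset.mem_univ, true_and, iff_true]
      refine ⟨⟨v.val, by omega⟩, Fin.ext ?_⟩
      rw [hd]
      simp
    have hle := aux_count d
    have hs : (Finset.univ.filter (fun k => ∀ j, d j = d k → j = k)).card ≤ 2 * N - K := by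
      have : (Finset.univ.filter (fun k => ∀ j, d j = d k → j = k)).card
          ≤ (Finset.Ico (K - N) N).card := by
        apply Finset.card_le_card_of_injOn (fun k => k.val)
        · intro k hk
          simp only [Finset.coe_filter, Finset.mem_univ, true_and, Set.mem_ofPred_eq] at hk
          simp only [Finset.coe_Ico, Set.mem_Ico]
          by_contra hcon
          by_cases hkN : k.val < N
          · have hx := hk ⟨k.val + N, by omega⟩ (Fin.ext (by
              rw [hd, hd]; simp [hkN]))
            have := congrArg Fin.val hx
            simp at this
            omega
          · have hx := hk ⟨k.val - N, by omega⟩ (Fin.ext (by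
              rw [hd, hd]
              have : k.val - N < N := by omega
              simp [hkN, this]))
            have := congrArg Fin.val hx
            simp at this
            omega
        · intro a _ b _ hab
          exact Fin.ext hab
      rw [Nat.card_Ico] at this
      omega
    rw [aux_sum hNK d]
    rw [himg] at hle ⊢
    rw [Finset.card_univ, Fintype.card_fin] at hle ⊢
    congr 2
    apply le_antisymm
    · omega
    · convert hs
  · rintro x ⟨d, rfl⟩
    rw [aux_sum hNK d]
    have hmN : (Finset.univ.image d).card ≤ N := by
      simpa using Finset.card_le_univ (Finset.univ.image d)
    refine le_trans (aux_mono (t := t) (by omega) hmN hNK) ?_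
    have hle := aux_count d
    gcongr
    omega
end

section
/- Let K, N, t be integers with N ≥ 1 and 1 ≤ t ≤ K. For a demand vector d : Fin K → Fin N, let Ne(d) denote the number of distinct values of d on Fin K, and for k ∈ Fin K let Ne_{\k}(d) denote the number of distinct values of d on (Fin K) \ {k}. Then for every demand vector d : Fin K → Fin N, (C(K−1, t) − (1/K)·Σ_{k ∈ Fin K} C(K − 1 − Ne_{\k}(d), t)) / C(K−1, t−1) ≤ 2 · (C(K, t+1) − C(K − Ne(d), t+1)) / C(K, t), as an inequality of real numbers. -/
/-- for every demand vector `d : Fin K → Fin N`, the optimal one-shot D2D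
load `(C(K−1,t) − (1/K)·∑_k C(K−1−Ne_{\k}(d), t)) / C(K−1,t−1)` is at most twice the
optimal shared-link load `(C(K,t+1) − C(K−Ne(d),t+1)) / C(K,t)`, where `Ne(d)` is the
number of distinct values of `d` on `Fin K` and `Ne_{\k}(d)` that on `(Fin K) \ {k}`. -/
theorem stmt_10 (K N t : ℕ) (hN : 1 ≤ N) (ht : 1 ≤ t) (htK : t ≤ K)
    (d : Fin K → Fin N) :
    ((Nat.choose (K - 1) t : ℝ) - (1 / (K : ℝ)) * ∑ k : Fin K,
        (Nat.choose (K - 1 - ((Finset.univ.erase k).image d).card) t : ℝ)) /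
      (Nat.choose (K - 1) (t - 1) : ℝ)
    ≤ 2 * (((Nat.choose K (t + 1) : ℝ)
          - (Nat.choose (K - (Finset.univ.image d).card) (t + 1) : ℝ)) /
        (Nat.choose K t : ℝ)) := by
  obtain ⟨m, rfl⟩ : ∃ m, K = m + 1 := ⟨K - 1, by omega⟩
  obtain ⟨s, rfl⟩ : ∃ s, t = s + 1 := ⟨t - 1, by omega⟩
  simp only [Nat.add_sub_cancel]
  set e := (Finset.univ.image d).card with he
  have hS : ((m + 1 : ℕ) : ℝ) * (Nat.choose (m - e) (s + 1) : ℝ) ≤ ∑ k : Fin (m + 1),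
      (Nat.choose (m - ((Finset.univ.erase k).image d).card) (s + 1) : ℝ) := by
    have h := Finset.card_nsmul_le_sum (Finset.univ : Finset (Fin (m + 1)))
      (fun k => (Nat.choose (m - ((Finset.univ.erase k).image d).card) (s + 1) : ℝ))
      (Nat.choose (m - e) (s + 1) : ℝ) (by
        intro k _
        have h1 : ((Finset.univ.erase k).image d).card ≤ e :=
          Finset.card_le_card (Finset.image_subset_image (Finset.erase_subset _ _))
        have h2 : m - e ≤ m - ((Finset.univ.erase k).image d).card := by omega
        exact_mod_cast Nat.choose_le_choose (s + 1) h2)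
    simpa using h
  set S := ∑ k : Fin (m + 1),
      (Nat.choose (m - ((Finset.univ.erase k).image d).card) (s + 1) : ℝ) with hSdef
  have h1 : ((m : ℝ) + 1) * (m.choose s : ℝ) = ((m + 1).choose (s + 1) : ℝ) * ((s : ℝ) + 1) := by
    exact_mod_cast Nat.add_one_mul_choose_eq m s
  have h2 : ((m : ℝ) + 1) * (m.choose (s + 1) : ℝ)
      = ((m + 1).choose (s + 1 + 1) : ℝ) * ((s : ℝ) + 1 + 1) := by
    exact_mod_cast Nat.add_one_mul_choose_eq m (s + 1)
  have h3 : ((m + 1 - e).choose (s + 1 + 1) : ℝ) * ((s : ℝ) + 1 + 1)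
      ≤ ((m : ℝ) + 1) * ((m - e).choose (s + 1) : ℝ) := by
    by_cases hem : e ≤ m
    · obtain ⟨n, hn⟩ := Nat.exists_eq_add_of_le hem
      have ha : m + 1 - e = n + 1 := by omega
      have hb : m - e = n := by omega
      rw [ha, hb]
      have h := Nat.add_one_mul_choose_eq n (s + 1)
      have h' : (n + 1) * n.choose (s + 1) ≤ (m + 1) * n.choose (s + 1) :=
        Nat.mul_le_mul_right _ (by omega)
      rw [h] at h'
      exact_mod_cast h'
    · have ha : m + 1 - e = 0 := by omega
      rw [ha]
      simp only [Nat.choose_zero_succ, Nat.cast_zero, zero_mul]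
      positivity
  have h4 : ((m + 1 - e).choose (s + 1 + 1) : ℝ) ≤ ((m + 1).choose (s + 1 + 1) : ℝ) := by
    exact_mod_cast Nat.choose_le_choose _ (by omega)
  have hp1 : (0 : ℝ) < (m.choose s : ℝ) := by
    exact_mod_cast Nat.choose_pos (by omega)
  have hp2 : (0 : ℝ) < ((m + 1).choose (s + 1) : ℝ) := by
    exact_mod_cast Nat.choose_pos (by omega)
  push_cast at hS ⊢
  have hm : (0 : ℝ) < (m : ℝ) + 1 := by positivity
  have hs : (0 : ℝ) ≤ (s : ℝ) := by positivity
  have hL : ((m.choose (s + 1) : ℝ) - 1 / ((m : ℝ) + 1) * S) / (m.choose s : ℝ)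
      = (((m + 1).choose (s + 1 + 1) : ℝ) * ((s : ℝ) + 1 + 1) - S) /
        (((m + 1).choose (s + 1) : ℝ) * ((s : ℝ) + 1)) := by
    rw [← h1, ← h2]
    field_simp
  rw [hL, ← mul_div_assoc, div_le_div_iff₀ (by positivity) hp2]
  have h5 := mul_le_mul_of_nonneg_left h4 hs
  have key : ((m + 1).choose (s + 1 + 1) : ℝ) * ((s : ℝ) + 1 + 1) - S ≤
      2 * (((m + 1).choose (s + 1 + 1) : ℝ) - ((m + 1 - e).choose (s + 1 + 1) : ℝ))
        * ((s : ℝ) + 1) := by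
    nlinarith
  have := mul_le_mul_of_nonneg_right key hp2.le
  linarith
end

section
/- Let K ≥ 2 and n be integers with 0 ≤ n ≤ K − 1, and define the real-valued sequence g(t) := (C(K−1, t) − C(K−1−n, t)) / C(K−1, t−1) for t ∈ {1, …, K}. Then (i) g is non-increasing: g(t+1) ≤ g(t) for 1 ≤ t ≤ K−1, and (ii) g is convex as a sequence: g(t−1) + g(t+1) ≥ 2·g(t) for 2 ≤ t ≤ K−1. -/
/-- The per-transmitter load sequence `g(t) = (C(K−1,t) − C(K−1−n,t)) / C(K−1,t−1)`. -/
noncomputable def loadSeq (K n : ℕ) (t : ℕ) : ℝ :=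
  ((Nat.choose (K - 1) t : ℝ) - (Nat.choose (K - 1 - n) t : ℝ)) /
    (Nat.choose (K - 1) (t - 1) : ℝ)

theorem ratio_aux (m j s : ℕ) (hj : j ≤ m) (hs : s ≤ m) :
    (j.choose s : ℝ) / (m.choose s : ℝ) = ((m - s).choose (m - j) : ℝ) / (m.choose j : ℝ) := by
  have h1 : (m.choose s : ℝ) ≠ 0 := by exact_mod_cast (Nat.choose_pos hs).ne'
  have h2 : (m.choose j : ℝ) ≠ 0 := by exact_mod_cast (Nat.choose_pos hj).ne'
  rw [div_eq_div_iff h1 h2]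
  by_cases hsj : s ≤ j
  · have h := Nat.choose_mul (n := m) (k := j) (s := s) hsj
    have e : (m - s).choose (m - j) = (m - s).choose (j - s) := by
      rw [← Nat.choose_symm (show j - s ≤ m - s by omega)]
      congr 1
      omega
    rw [e]
    have h' : (m.choose j : ℝ) * j.choose s = m.choose s * (m - s).choose (j - s) := by
      exact_mod_cast h
    linarith
  · rw [Nat.choose_eq_zero_of_lt (show j < s by omega),
      Nat.choose_eq_zero_of_lt (show m - s < m - j by omega)]
    simp

theorem tele_aux (p n s : ℕ) :
    ((p + n).choose (s + 1) : ℝ) - (p.choose (s + 1) : ℝ)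
      = ∑ i ∈ Finset.range n, ((p + i).choose s : ℝ) := by
  induction n with
  | zero => simp
  | succ k ih =>
    rw [Finset.sum_range_succ, ← ih, ← add_assoc, Nat.choose_succ_succ]
    push_cast
    ring

theorem loadSeq_aux (p n s : ℕ) (hs : s ≤ p + n) :
    loadSeq (p + n + 1) n (s + 1)
      = ∑ i ∈ Finset.range n, ((p + n - s).choose (n - i) : ℝ) / ((p + n).choose (p + i) : ℝ) := by
  unfold loadSeq
  have e1 : p + n + 1 - 1 = p + n := by omega
  have e2 : p + n - n = p := by omega
  rw [e1, e2, tele_aux, Finset.sum_div]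
  refine Finset.sum_congr rfl fun i hi => ?_
  have hi' := Finset.mem_range.1 hi
  have e3 : s + 1 - 1 = s := by omega
  rw [e3, ratio_aux _ _ _ (by omega) hs]
  congr 3
  omega

theorem convex_aux (x k : ℕ) :
    2 * ((x + 1).choose (k + 1) : ℝ) ≤ (x + 2).choose (k + 1) + x.choose (k + 1) := by
  have h : (x.choose k : ℝ) ≤ (x + 1).choose k := by
    exact_mod_cast Nat.choose_le_choose k (Nat.le_succ x)
  rw [Nat.choose_succ_succ (x + 1) k, Nat.choose_succ_succ x k]
  push_cast
  linarith

/-- for `K ≥ 2` and `0 ≤ n ≤ K−1`, the sequence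
`g(t) = (C(K−1,t) − C(K−1−n,t)) / C(K−1,t−1)`, `t ∈ {1,…,K}`, is
(i) non-increasing: `g(t+1) ≤ g(t)` for `1 ≤ t ≤ K−1`, and
(ii) convex: `g(t−1) + g(t+1) ≥ 2·g(t)` for `2 ≤ t ≤ K−1`. -/
theorem stmt_11 (K n : ℕ) (hK : 2 ≤ K) (hn : n ≤ K - 1) :
    (∀ t : ℕ, 1 ≤ t → t ≤ K - 1 → loadSeq K n (t + 1) ≤ loadSeq K n t) ∧
    (∀ t : ℕ, 2 ≤ t → t ≤ K - 1 →
      loadSeq K n (t - 1) + loadSeq K n (t + 1) ≥ 2 * loadSeq K n t) := by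
  obtain ⟨p, rfl⟩ : ∃ p, K = p + n + 1 := ⟨K - 1 - n, by omega⟩
  constructor
  · intro t h1 h2
    obtain ⟨s, rfl⟩ : ∃ s, t = s + 1 := ⟨t - 1, by omega⟩
    rw [loadSeq_aux _ _ _ (by omega), loadSeq_aux _ _ _ (by omega)]
    refine Finset.sum_le_sum fun i _ => ?_
    refine div_le_div_of_nonneg_right ?_ (Nat.cast_nonneg _)
    exact_mod_cast Nat.choose_le_choose _ (by omega)
  · intro t h1 h2
    obtain ⟨s, rfl⟩ : ∃ s, t = s + 1 + 1 := ⟨t - 2, by omega⟩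
    have e : s + 1 + 1 - 1 = s + 1 := by omega
    rw [e, loadSeq_aux _ _ _ (by omega), loadSeq_aux _ _ _ (by omega),
      loadSeq_aux _ _ _ (by omega), ge_iff_le, Finset.mul_sum, ← Finset.sum_add_distrib]
    refine Finset.sum_le_sum fun i hi => ?_
    have hi' := Finset.mem_range.1 hi
    rw [← add_div, ← mul_div_assoc]
    refine div_le_div_of_nonneg_right ?_ (Nat.cast_nonneg _)
    obtain ⟨x, hx⟩ : ∃ x, p + n = s + x + 2 := ⟨p + n - s - 2, by omega⟩
    obtain ⟨k, hk⟩ : ∃ k, n - i = k + 1 := ⟨n - i - 1, by omega⟩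
    have e1 : p + n - (s + 1) = x + 1 := by omega
    have e2 : p + n - s = x + 2 := by omega
    have e3 : p + n - (s + 1 + 1) = x := by omega
    rw [e1, e2, e3, hk]
    exact convex_aux x k
end

section
/- Fix integers K ≥ 2, N ≥ 1. Say two demand vectors d, d' : Fin K → Fin N have the same composition if the multisets of multiplicities {|d⁻¹(q)| : q ∈ Fin N} and {|d'⁻¹(q)| : q ∈ Fin N} coincide, and let D_s denote the set of all demand vectors with a fixed composition s. For a demand vector d, a transmitter i, a user k ∉ V and a nonempty set V ⊆ (Fin K) \ {k} with i ∈ V, let A(d, i, k, V) be the number of enumerations u = (u_1, …, u_{K−1}) of (Fin K) \ {i} without repetition such that k occupies a leader position j of u and no element of V occupies a leader position j' ≤ j of u. Define b(q, V) := Σ_{d ∈ D_s} Σ_{k ∈ (Fin K) \ V : d(k) = q} Σ_{i ∈ V} A(d, i, k, V) for each file q ∈ Fin N and nonempty V ⊆ Fin K. Then b(q₁, V₁) = b(q₂, V₂) whenever |V₁| = |V₂|, for all files q₁, q₂ ∈ Fin N and nonempty subsets V₁, V₂ ⊆ Fin K. -/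
/-- The composition of a demand vector `d : Fin K → Fin N`: the multiset of
multiplicities `|d⁻¹(q)|`, `q ∈ Fin N`. -/
def demandComposition (K N : ℕ) (d : Fin K → Fin N) : Multiset ℕ :=
  (Finset.univ.val : Multiset (Fin N)).map
    fun q => (Finset.univ.filter fun k => d k = q).card

/-- `numEnum K N d i k V` is the number `A(d, i, k, V)` of enumerations
`u = (u_1, …, u_{K−1})` of `(Fin K) \ {i}` without repetition such that
(a) `k` occupies a leader position `j` of `u`, i.e. `u j = k` and `d (u j') ≠ d k`
for all `j' < j`, and
(b) no element of `V` occupies a leader position `j' ≤ j` of `u`. -/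
noncomputable def numEnum (K N : ℕ) (d : Fin K → Fin N) (i k : Fin K)
    (V : Finset (Fin K)) : ℕ :=
  Set.ncard {u : Fin (K - 1) → Fin K |
    Function.Injective u ∧ Set.range u = ({i} : Set (Fin K))ᶜ ∧
    ∃ j : Fin (K - 1), u j = k ∧ (∀ j' < j, d (u j') ≠ d k) ∧
      (∀ j' ≤ j, (∀ j'' < j', d (u j'') ≠ d (u j')) → u j' ∉ V)}

/-- `b(q, V) = ∑_{d ∈ D_s} ∑_{k ∉ V, d k = q} ∑_{i ∈ V} A(d, i, k, V)`, summing over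
all demand vectors `d` of composition `s`. -/
noncomputable def bCoeff (K N : ℕ) (s : Multiset ℕ) (q : Fin N)
    (V : Finset (Fin K)) : ℕ :=
  ∑ d ∈ Finset.univ.filter
      (fun d : Fin K → Fin N => demandComposition K N d = s),
    ∑ k ∈ (Finset.univ \ V).filter (fun k => d k = q),
      ∑ i ∈ V, numEnum K N d i k V

theorem demandComposition_perm (K N : ℕ) (σ : Equiv.Perm (Fin K)) (π : Equiv.Perm (Fin N))
    (d : Fin K → Fin N) :
    demandComposition K N (fun k => π (d (σ.symm k))) = demandComposition K N d := by
  unfold demandComposition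
  have h : ∀ q, (Finset.univ.filter fun k => π (d (σ.symm k)) = q).card
      = (Finset.univ.filter fun k => d k = π.symm q).card := by
    intro q
    refine Finset.card_equiv σ.symm ?_
    intro k
    simp [Equiv.eq_symm_apply]
  simp only [h]
  have h2 : (Finset.univ.val : Multiset (Fin N)).map π.symm = Finset.univ.val :=
    Multiset.map_univ_val_equiv π.symm
  conv_rhs => rw [← h2]
  rw [Multiset.map_map]
  rfl

theorem numEnum_perm (K N : ℕ) (σ : Equiv.Perm (Fin K)) (π : Equiv.Perm (Fin N))
    (d : Fin K → Fin N) (i k : Fin K) (V V' : Finset (Fin K))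
    (hV : ∀ x, σ x ∈ V' ↔ x ∈ V) :
    numEnum K N d i k V = numEnum K N (fun k => π (d (σ.symm k))) (σ i) (σ k) V' := by
  unfold numEnum
  refine Set.ncard_congr (fun u _ => σ ∘ u) ?_ ?_ ?_
  · rintro u ⟨h1, h2, j, h3, h4, h5⟩
    refine ⟨σ.injective.comp h1, ?_, j, by simp [h3], ?_, ?_⟩
    · rw [Set.range_comp, h2, Set.image_compl_eq σ.bijective, Set.image_singleton]
    · simpa using h4
    · simpa [hV] using h5
  · intro u v _ _ h
    exact σ.injective.comp_left h
  · rintro v ⟨h1, h2, j, h3, h4, h5⟩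
    refine ⟨σ.symm ∘ v, ⟨σ.symm.injective.comp h1, ?_, j, by simp [h3], ?_, ?_⟩, ?_⟩
    · rw [Set.range_comp, h2, Set.image_compl_eq σ.symm.bijective, Set.image_singleton]
      simp
    · simpa using h4
    · intro j' hj' hl
      have := h5 j' hj' (by simpa using hl)
      simpa [← hV] using this
    · ext x
      simp

/-- the coefficient `b(q, V)` depends only on the cardinality `|V|`. -/
theorem stmt_13 (K N : ℕ) (hK : 2 ≤ K) (hN : 1 ≤ N) (s : Multiset ℕ)
    (q₁ q₂ : Fin N) (V₁ V₂ : Finset (Fin K))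
    (h₁ : V₁.Nonempty) (h₂ : V₂.Nonempty) (hcard : V₁.card = V₂.card) :
    bCoeff K N s q₁ V₁ = bCoeff K N s q₂ V₂ := by
  classical
  obtain ⟨σ, hσ⟩ : ∃ σ : Equiv.Perm (Fin K), ∀ x, σ x ∈ V₂ ↔ x ∈ V₁ := by
    let e : {x // x ∈ V₁} ≃ {x // x ∈ V₂} := Finset.equivOfCardEq hcard
    refine ⟨e.extendSubtype, fun x => ⟨fun h => ?_, fun h => e.extendSubtype_mem x h⟩⟩
    by_contra hx
    exact e.extendSubtype_not_mem x hx h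
  let π : Equiv.Perm (Fin N) := Equiv.swap q₁ q₂
  have hπ : π q₁ = q₂ := Equiv.swap_apply_left q₁ q₂
  unfold bCoeff
  refine Finset.sum_equiv (Equiv.arrowCongr σ π) ?_ ?_
  · intro d
    have := demandComposition_perm K N σ π d
    simp only [Finset.mem_filter, Finset.mem_univ, true_and]
    change _ ↔ demandComposition K N (fun k => π (d (σ.symm k))) = s
    rw [this]
  · intro d _
    refine Finset.sum_equiv σ ?_ ?_
    · intro k
      simp [hσ, ← hπ]
    · intro k _
      refine Finset.sum_equiv σ (fun i => (hσ i).symm) ?_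
      intro i _
      exact numEnum_perm K N σ π d i k V₁ V₂ hσ
end
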